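/- Cross-place communication events in the semantics of transformed phrases satisfy the protection criterion: for every Copland phrase t, place p, evidence e, and position φ, if v is a cross-place communication event of the data flow graph C(epp(t,p,e),p,φ,e), then τ(ε(v)) ⊆ {ϱ(v)}. -/

import Mathlib

namespace Copland

/-- Places are drawn from a countable set. -/
abbrev Place := ℕ
/-- Symbols (measurement/target identifiers) are drawn from a countable set. -/
abbrev Symb := ℕ

/-- Splitting specifications: `+` or `-`. -/
inductive Split where
  | plus
  | minus
deriving DecidableEq, Repr

/-- Copland phrases. -/
inductive Phrase where
  | meas : Symb → Place → Symb → Phrase          -- measurement  m q s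
  | att  : Place → Phrase → Phrase               -- @_q [ t ]
  | copy : Phrase                                 -- _
  | sign : Phrase                                 -- !
  | hash : Phrase                                 -- #
  | lseq : Phrase → Phrase → Phrase               -- t1 → t2
  | bseq : Split → Split → Phrase → Phrase → Phrase  -- t1 d1<d2 t2
  | bpar : Split → Split → Phrase → Phrase → Phrase  -- t1 d1~d2 t2
deriving DecidableEq, Repr

/-- Evidence terms. -/
inductive Evidence where
  | empty : Evidence                                          -- ξ
  | meas : Symb → Place → Symb → Place → List ℕ → Evidence → Evidence  -- m(ms(m,q,s),p,φ,e)
  | sig  : Evidence → Place → Evidence                        -- [[e]]_p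
  | hash : Evidence → Place → Evidence                        -- #{e}_p
  | seqc : Evidence → Evidence → Evidence                     -- e1 ;; e2
  | parc : Evidence → Evidence → Evidence                     -- e1 || e2
deriving DecidableEq, Repr

/-- The effect `d(e)` of a splitting specification on evidence. -/
def splitEv : Split → Evidence → Evidence
  | .plus, e => e
  | .minus, _ => .empty

/-- The Copland evidence semantics `E(t,p,φ,e)`. -/
def eval : Phrase → Place → List ℕ → Evidence → Evidence
  | .meas m q s, p, φ, e => .meas m q s p φ e
  | .copy, _, _, e => e
  | .sign, p, _, e => .sig e p
  | .hash, p, _, e => .hash e p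
  | .att q t, _, φ, e => eval t q (1 :: φ) e
  | .lseq t1 t2, p, φ, e => eval t2 p (2 :: φ) (eval t1 p (1 :: φ) e)
  | .bseq d1 d2 t1 t2, p, φ, e =>
      .seqc (eval t1 p (1 :: φ) (splitEv d1 e)) (eval t2 p (2 :: φ) (splitEv d2 e))
  | .bpar d1 d2 t1 t2, p, φ, e =>
      .parc (eval t1 p (1 :: φ) (splitEv d1 e)) (eval t2 p (2 :: φ) (splitEv d2 e))

/-- Join operators: sequential `<` or parallel `~`. -/
inductive JoinOp where
  | seqJ
  | parJ
deriving DecidableEq, Repr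

/-- Event labels. -/
inductive Label where
  | msp   : Place → Evidence → Label                    -- p : msp(e)
  | cpy   : Place → Evidence → Label                    -- p : cpy(e)
  | sig   : Place → Evidence → Label                    -- p : sig(e)
  | hsh   : Place → Evidence → Label                    -- p : hsh(e)
  | req   : Place → Place → Evidence → Label            -- p : req(q,e)
  | rpy   : Place → Place → Evidence → Label            -- p : rpy(q,e)
  | split : Place → Split → Split → Evidence → Label    -- p : split(d1,d2,e)
  | join  : Place → JoinOp → Evidence → Label           -- p : join(o,e)
deriving DecidableEq, Repr

/-- The (sending) place `ϱ(v)`: the place before the colon in the label. -/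
def Label.place : Label → Place
  | .msp p _ => p
  | .cpy p _ => p
  | .sig p _ => p
  | .hsh p _ => p
  | .req p _ _ => p
  | .rpy p _ _ => p
  | .split p _ _ _ => p
  | .join p _ _ => p

/-- The receiving place `ϱ'(v)`. -/
def Label.recvPlace : Label → Place
  | .req _ q _ => q
  | .rpy _ q _ => q
  | l => l.place

/-- The evidence `ε(v)`: the last argument of the label. -/
def Label.evid : Label → Evidence
  | .msp _ e => e
  | .cpy _ e => e
  | .sig _ e => e
  | .hsh _ e => e
  | .req _ _ e => e
  | .rpy _ _ e => e
  | .split _ _ _ e => e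
  | .join _ _ e => e

/-- A measurement event is one whose label has the form `p : msp(e)`. -/
def Label.IsMeas (l : Label) : Prop := ∃ p e, l = .msp p e

/-- A cross-place communication event is one with `ϱ(v) ≠ ϱ'(v)`. -/
def Label.IsCross (l : Label) : Prop := l.place ≠ l.recvPlace

/-- A data flow graph: events are the naturals `0, …, n-1`, with an input event,
an output event, flow edges, and a labeling. -/
structure DFG where
  n : ℕ
  vin : ℕ
  vout : ℕ
  edges : List (ℕ × ℕ)
  label : ℕ → Label

namespace DFG

/-- Well-formedness of a data flow graph: events are in range, the flow
relation is acyclic, and there is no edge into the input event nor out of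
the output event. -/
def WF (G : DFG) : Prop :=
  G.vin < G.n ∧ G.vout < G.n ∧
  (∀ pr ∈ G.edges, pr.1 < G.n ∧ pr.2 < G.n) ∧
  (∀ v, ¬ Relation.TransGen (fun a b => (a, b) ∈ G.edges) v v) ∧
  (∀ pr ∈ G.edges, pr.2 ≠ G.vin ∧ pr.1 ≠ G.vout)

/-- The single-event data flow graph. -/
def single (l : Label) : DFG :=
  { n := 1, vin := 0, vout := 0, edges := [], label := fun _ => l }

/-- Before-copy composition: the second graph's events are renumbered after the
first's, and a flow edge links the output of the first to the input of the second. -/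
def seqComp (G1 G2 : DFG) : DFG :=
  { n := G1.n + G2.n
    vin := G1.vin
    vout := G1.n + G2.vout
    edges := G1.edges ++ G2.edges.map (fun pr => (G1.n + pr.1, G1.n + pr.2)) ++
      [(G1.vout, G1.n + G2.vin)]
    label := fun i => if i < G1.n then G1.label i else G2.label (i - G1.n) }

/-- Branching composition: a split event, the two subgraphs (with a flow edge from
the split into the input of a subgraph exactly when the corresponding splitting
specification is `+`), and a join event receiving flow from both outputs. -/
def branch (sp jn : Label) (d1 d2 : Split) (G1 G2 : DFG) : DFG :=
  { n := G1.n + G2.n + 2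
    vin := 0
    vout := G1.n + G2.n + 1
    edges :=
      G1.edges.map (fun pr => (pr.1 + 1, pr.2 + 1)) ++
      G2.edges.map (fun pr => (pr.1 + 1 + G1.n, pr.2 + 1 + G1.n)) ++
      (if d1 = Split.plus then [(0, G1.vin + 1)] else []) ++
      (if d2 = Split.plus then [(0, G2.vin + 1 + G1.n)] else []) ++
      [(G1.vout + 1, G1.n + G2.n + 1), (G2.vout + 1 + G1.n, G1.n + G2.n + 1)]
    label := fun i =>
      if i = 0 then sp
      else if i < G1.n + 1 then G1.label (i - 1)
      else if i < G1.n + G2.n + 1 then G2.label (i - 1 - G1.n)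
      else jn }

end DFG

/-- The Copland data flow semantics `C(t,p,φ,e)`. -/
def sem : Phrase → Place → List ℕ → Evidence → DFG
  | .meas m q s, p, φ, e => .single (.msp p (.meas m q s p φ e))
  | .copy, p, _, e => .single (.cpy p e)
  | .sign, p, _, e => .single (.sig p (.sig e p))
  | .hash, p, _, e => .single (.hsh p (.hash e p))
  | .att q t, p, φ, e =>
      (DFG.single (.req p q e)).seqComp
        ((sem t q (1 :: φ) e).seqComp (.single (.rpy q p (eval t q (1 :: φ) e))))
  | .lseq t1 t2, p, φ, e =>
      (sem t1 p (1 :: φ) e).seqComp (sem t2 p (2 :: φ) (eval t1 p (1 :: φ) e))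
  | .bseq d1 d2 t1 t2, p, φ, e =>
      DFG.branch (.split p d1 d2 e)
        (.join p .seqJ (eval (.bseq d1 d2 t1 t2) p φ e)) d1 d2
        (sem t1 p (1 :: φ) (splitEv d1 e)) (sem t2 p (2 :: φ) (splitEv d2 e))
  | .bpar d1 d2 t1 t2, p, φ, e =>
      DFG.branch (.split p d1 d2 e)
        (.join p .parJ (eval (.bpar d1 d2 t1 t2) p φ e)) d1 d2
        (sem t1 p (1 :: φ) (splitEv d1 e)) (sem t2 p (2 :: φ) (splitEv d2 e))

namespace DFG

/-- A path of a data flow graph: a nonempty sequence of events of the graph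
successively related by flow edges. -/
def IsPath (G : DFG) (π : List ℕ) : Prop :=
  π ≠ [] ∧ (∀ v ∈ π, v < G.n) ∧ π.Chain' (fun a b => (a, b) ∈ G.edges)

/-- One step of the tamper set computation. -/
def tsStep (G : DFG) (s : Set Place) (v : ℕ) : Set Place :=
  match G.label v with
  | .sig p _ => {p} ∩ s
  | _ => s

/-- The tamper set `ts(π)` of a path: `ts(⟨v⟩)` is the set of all places if `v` is a
measurement event and `∅` otherwise; `ts(π § v) = {p} ∩ ts(π)` if `ℓ(v) = p:sig(e)`,
and `ts(π § v) = ts(π)` otherwise. -/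
def ts (G : DFG) (π : List ℕ) : Set Place :=
  match π with
  | [] => ∅
  | v :: rest =>
      rest.foldl (tsStep G)
        (match G.label v with
          | .msp _ _ => Set.univ
          | _ => ∅)

/-- A path is `p`-signing iff every signature event on it occurs at `p`. -/
def Signing (G : DFG) (π : List ℕ) (p : Place) : Prop :=
  ∀ v ∈ π, ∀ q e, G.label v = .sig q e → q = p

/-- A path `π = ⟨v, …, v'⟩` permits tampering (at `v'` with the evidence from `v`)
iff (1) `v` is a measurement event, (2) the length of `π` exceeds 1, and
(3) `π` is `ϱ(v')`-signing or `ϱ'(v')`-signing. -/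
def PermitsTamper (G : DFG) (π : List ℕ) : Prop :=
  (∀ v, π.head? = some v → (G.label v).IsMeas) ∧
  1 < π.length ∧
  (∀ v', π.getLast? = some v' →
    G.Signing π (G.label v').place ∨ G.Signing π (G.label v').recvPlace)

/-- A path `⟨v1,…,vn⟩` is local to place `p` iff every interior event has both
sending and receiving place `p`, and each endpoint has sending or receiving place `p`. -/
def LocalTo (G : DFG) (π : List ℕ) (p : Place) : Prop :=
  (∀ i v, 0 < i → i + 1 < π.length → π[i]? = some v →
      (G.label v).place = p ∧ (G.label v).recvPlace = p) ∧
  (∀ v, π.head? = some v → (G.label v).place = p ∨ (G.label v).recvPlace = p) ∧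
  (∀ v, π.getLast? = some v → (G.label v).place = p ∨ (G.label v).recvPlace = p)

/-- `π` is a path of `G` from `v` to `v'`. -/
def PathBetween (G : DFG) (v v' : ℕ) (π : List ℕ) : Prop :=
  G.IsPath π ∧ π.head? = some v ∧ π.getLast? = some v'

/-- A set `S` of events of `G` is a tamper strategy for `v` iff every path from `v`
to the output event of `G` contains an event `v' ∈ S` such that the prefix
`⟨v, …, v'⟩` of the path permits tampering. -/
def TamperStrategy (G : DFG) (S : Set ℕ) (v : ℕ) : Prop :=
  (∀ w ∈ S, w < G.n) ∧
  ∀ π, G.PathBetween v G.vout π →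
    ∃ v' ∈ S, ∃ π', π' <+: π ∧ π'.getLast? = some v' ∧ G.PermitsTamper π'

/-- `S` is a minimal tamper strategy for `v` iff it is a tamper strategy for `v` and
every tamper strategy for `v` included in `S` equals `S`. -/
def MinimalTamperStrategy (G : DFG) (S : Set ℕ) (v : ℕ) : Prop :=
  G.TamperStrategy S v ∧ ∀ S', G.TamperStrategy S' v → S' ⊆ S → S' = S

/-- A path `π = ⟨v1,…,vn⟩` is protected iff either `v1` is not a measurement event,
or for every `1 < i ≤ n`, if `vi` is a cross-place communication event then
`ts(⟨v1,…,vi⟩) ⊆ {ϱ(vi)}`. -/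
def ProtectedPath (G : DFG) (π : List ℕ) : Prop :=
  (∀ v, π.head? = some v → ¬ (G.label v).IsMeas) ∨
  (∀ i v, 0 < i → i < π.length → π[i]? = some v → (G.label v).IsCross →
      G.ts (π.take (i + 1)) ⊆ {(G.label v).place})

/-- A data flow graph is protected iff all of its paths are protected. -/
def Protected (G : DFG) : Prop :=
  ∀ π, G.IsPath π → G.ProtectedPath π

end DFG

/-- The tamper places function `τ` on evidence. -/
def tau : Evidence → Set Place
  | .empty => ∅
  | .meas _ _ _ _ _ _ => Set.univ
  | .hash e _ => tau e
  | .sig e p => {p} ∩ tau e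
  | .seqc e1 e2 => tau e1 ∪ tau e2
  | .parc e1 e2 => tau e1 ∪ tau e2

open scoped Classical in
/-- The Evidence Protection Program `epp(t,p,e)`. -/
noncomputable def epp : Phrase → Place → Evidence → Phrase
  | .meas m q s, _, _ => .meas m q s
  | .copy, _, _ => .copy
  | .sign, _, _ => .sign
  | .hash, _, _ => .hash
  | .lseq t1 t2, p, e =>
      .lseq (epp t1 p e) (epp t2 p (eval (epp t1 p e) p [] e))
  | .att q t, p, e =>
      if q = p then .att q (epp t p e)
      else if tau e ⊆ {p} then
        if tau (eval (epp t q e) q [] e) ⊆ {q} then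
          .att q (epp t q e)
        else
          .att q (.lseq (epp t q e) .sign)
      else
        if tau (eval (epp t q (.sig e p)) q [] (.sig e p)) ⊆ {q} then
          .lseq .sign (.att q (epp t q (.sig e p)))
        else
          .lseq .sign (.att q (.lseq (epp t q (.sig e p)) .sign))
  | .bseq d1 d2 t1 t2, p, e =>
      .bseq d1 d2 (epp t1 p (splitEv d1 e)) (epp t2 p (splitEv d2 e))
  | .bpar d1 d2 t1 t2, p, e =>
      .bpar d1 d2 (epp t1 p (splitEv d1 e)) (epp t2 p (splitEv d2 e))

end Copland

/-!
`epp` decides whether to insert a signature before a request or a reply by inspecting evidence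
computed at the position `⟨⟩`, whereas the transformed phrase runs at other positions and so
produces different evidence. This is harmless because the evidence argument matters only through
its tamper places: `τ (E(t,p,φ,e))` and `epp(t,p,e)` are functions of `τ e`, and the former does
not involve `φ`. Hence the decisions made by `epp` remain correct at run time: a request or reply
to another place carries either evidence already tamperable only at the sender `p`, or evidence
`[[e]]_p` just signed by the sender, whose tamper places lie in `{p} ∩ τ e`.
-/

namespace Copland

theorem tau_sig_subset (e : Evidence) (p : Place) : tau (.sig e p) ⊆ {p} :=
  Set.inter_subset_left

theorem tau_splitEv_congr (d : Split) {e e' : Evidence} (h : tau e = tau e') :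
    tau (splitEv d e) = tau (splitEv d e') := by
  cases d
  case plus => exact h
  case minus => rfl

theorem tau_eval_congr (t : Phrase) (p : Place) (φ ψ : List ℕ) {e e' : Evidence}
    (h : tau e = tau e') : tau (eval t p φ e) = tau (eval t p ψ e') := by
  induction t generalizing p φ ψ e e' with
  | meas m q s => rfl
  | copy | hash => exact h
  | sign => exact congrArg ({p} ∩ ·) h
  | att q _ ih => exact ih q _ _ h
  | lseq _ _ ih₁ ih₂ => exact ih₂ p _ _ (ih₁ p _ _ h)
  | bseq d₁ d₂ t₁ t₂ ih₁ ih₂ | bpar d₁ d₂ t₁ t₂ ih₁ ih₂ =>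
    exact congrArg₂ (· ∪ ·) (ih₁ p _ _ (tau_splitEv_congr d₁ h))
      (ih₂ p _ _ (tau_splitEv_congr d₂ h))

theorem epp_congr (t : Phrase) (p : Place) {e e' : Evidence} (h : tau e = tau e') :
    epp t p e = epp t p e' := by
  induction t generalizing p e e' with
  | meas m q s | copy | sign | hash => rfl
  | att q t ih =>
    have hsig : tau (.sig e p) = tau (.sig e' p) := congrArg ({p} ∩ ·) h
    rw [epp, epp, ih p h, ih q h, ih q hsig, h, tau_eval_congr _ q [] [] h,
      tau_eval_congr _ q [] [] hsig]
  | lseq t₁ t₂ ih₁ ih₂ => rw [epp, epp, ih₁ p h, ih₂ p (tau_eval_congr _ p [] [] h)]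
  | bseq d₁ d₂ t₁ t₂ ih₁ ih₂ | bpar d₁ d₂ t₁ t₂ ih₁ ih₂ =>
    rw [epp, epp, ih₁ p (tau_splitEv_congr d₁ h), ih₂ p (tau_splitEv_congr d₂ h)]

section Remote

open scoped Classical in
/-- The part of `epp(@_q[t],p,e)`, for `q ≠ p`, that follows the optional signature by `p`: the
remote execution of the transformed `t`, with a signature by `q` appended when the resulting
evidence could be tampered with outside `q`. It isolates the decision about the reply from the
decision about the request. -/
noncomputable def eppRemote (t : Phrase) (q : Place) (e : Evidence) : Phrase :=
  if tau (eval (epp t q e) q [] e) ⊆ {q} then .att q (epp t q e)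
  else .att q (.lseq (epp t q e) .sign)

theorem epp_att_self (t : Phrase) (p : Place) (e : Evidence) :
    epp (.att p t) p e = .att p (epp t p e) :=
  if_pos rfl

variable {p q : Place} {e : Evidence}

theorem epp_att_of_subset (hqp : q ≠ p) (he : tau e ⊆ {p}) (t : Phrase) :
    epp (.att q t) p e = eppRemote t q e := by
  rw [epp, if_neg hqp, if_pos he, eppRemote]

theorem epp_att_of_not_subset (hqp : q ≠ p) (he : ¬ tau e ⊆ {p}) (t : Phrase) :
    epp (.att q t) p e = .lseq .sign (eppRemote t q (.sig e p)) := by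
  rw [epp, if_neg hqp, if_neg he, eppRemote, apply_ite (Phrase.lseq .sign)]

end Remote

namespace DFG

/-- The label of every event of `G` satisfies `P`. The values of `G.label` outside the range
`0, …, n - 1` are junk and are not constrained. -/
def ForallLabel (G : DFG) (P : Label → Prop) : Prop :=
  ∀ v < G.n, P (G.label v)

variable {P : Label → Prop} {G₁ G₂ : DFG}

theorem forallLabel_single {l : Label} : (single l).ForallLabel P ↔ P l :=
  ⟨fun h => h 0 Nat.one_pos, fun h _ _ => h⟩

theorem forallLabel_seqComp :
    (G₁.seqComp G₂).ForallLabel P ↔ G₁.ForallLabel P ∧ G₂.ForallLabel P := by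
  simp only [ForallLabel, seqComp]
  constructor
  · intro h
    refine ⟨fun v hv => ?_, fun v hv => ?_⟩
    · simpa [hv] using h v (by omega)
    · simpa using h (G₁.n + v) (by omega)
  · rintro ⟨h₁, h₂⟩ v hv
    split_ifs with hv₁
    · exact h₁ v hv₁
    · exact h₂ _ (by omega)

theorem forallLabel_branch {sp jn : Label} {d₁ d₂ : Split} :
    (branch sp jn d₁ d₂ G₁ G₂).ForallLabel P ↔
      P sp ∧ G₁.ForallLabel P ∧ G₂.ForallLabel P ∧ P jn := by
  simp only [ForallLabel, branch]
  constructor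
  · intro h
    refine ⟨by simpa using h 0 (by omega), fun v hv => ?_, fun v hv => ?_, ?_⟩
    · simpa [hv] using h (v + 1) (by omega)
    · have hlt : v + 1 + G₁.n < G₁.n + G₂.n + 1 := by omega
      have hge : ¬ v + 1 + G₁.n < G₁.n + 1 := by omega
      have hsub : v + 1 + G₁.n - 1 - G₁.n = v := by omega
      simpa [hlt, hge, hsub] using h (v + 1 + G₁.n) (by omega)
    · have hge : ¬ G₁.n + G₂.n + 1 < G₁.n + 1 := by omega
      simpa [hge] using h (G₁.n + G₂.n + 1) (by omega)
  · rintro ⟨hsp, h₁, h₂, hjn⟩ v _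
    split_ifs
    · exact hsp
    · exact h₁ _ (by omega)
    · exact h₂ _ (by omega)
    · exact hjn

theorem forallLabel_sem_att {t : Phrase} {p q : Place} {φ : List ℕ} {e : Evidence} :
    (sem (.att q t) p φ e).ForallLabel P ↔
      P (.req p q e) ∧ (sem t q (1 :: φ) e).ForallLabel P ∧
        P (.rpy q p (eval t q (1 :: φ) e)) := by
  rw [sem, forallLabel_seqComp, forallLabel_seqComp, forallLabel_single, forallLabel_single]

end DFG

/-- The protection criterion on a single event: if it is a cross-place communication, then its
evidence can be tampered with only at the sending place. -/
def Label.ProtectionCriterion (l : Label) : Prop :=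
  l.IsCross → tau l.evid ⊆ {l.place}

namespace Label.ProtectionCriterion

theorem of_place_eq_recvPlace {l : Label} (h : l.place = l.recvPlace) :
    l.ProtectionCriterion :=
  fun hl => absurd h hl

theorem req {p q : Place} {e : Evidence} (he : tau e ⊆ {p}) :
    (Label.req p q e).ProtectionCriterion :=
  fun _ => he

theorem rpy {p q : Place} {e : Evidence} (he : tau e ⊆ {p}) :
    (Label.rpy p q e).ProtectionCriterion :=
  fun _ => he

end Label.ProtectionCriterion

open DFG Label

theorem forallLabel_sem_sign (p : Place) (φ : List ℕ) (e : Evidence) :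
    (sem .sign p φ e).ForallLabel ProtectionCriterion :=
  forallLabel_single.2 (.of_place_eq_recvPlace rfl)

theorem forallLabel_sem_eppRemote {t : Phrase} {p q : Place} {e : Evidence} (he : tau e ⊆ {p})
    (ht : ∀ φ, (sem (epp t q e) q φ e).ForallLabel ProtectionCriterion) (φ : List ℕ) :
    (sem (eppRemote t q e) p φ e).ForallLabel ProtectionCriterion := by
  rw [eppRemote]
  split_ifs with hrpy
  · have hrpyφ : tau (eval (epp t q e) q (1 :: φ) e) ⊆ {q} :=
      (tau_eval_congr _ q _ [] rfl).trans_subset hrpy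
    exact forallLabel_sem_att.2 ⟨.req he, ht _, .rpy hrpyφ⟩
  · have hbody : (sem (.lseq (epp t q e) .sign) q (1 :: φ) e).ForallLabel ProtectionCriterion :=
      forallLabel_seqComp.2 ⟨ht _, forallLabel_sem_sign q _ _⟩
    exact forallLabel_sem_att.2 ⟨.req he, hbody, .rpy (tau_sig_subset _ q)⟩

theorem forallLabel_sem_epp_att {t : Phrase} {q : Place}
    (ht : ∀ φ e, (sem (epp t q e) q φ e).ForallLabel ProtectionCriterion)
    (p : Place) (φ : List ℕ) (e : Evidence) :
    (sem (epp (.att q t) p e) p φ e).ForallLabel ProtectionCriterion := by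
  obtain rfl | hqp := eq_or_ne q p
  · rw [epp_att_self]
    exact forallLabel_sem_att.2
      ⟨.of_place_eq_recvPlace rfl, ht _ e, .of_place_eq_recvPlace rfl⟩
  by_cases he : tau e ⊆ {p}
  · rw [epp_att_of_subset hqp he]
    exact forallLabel_sem_eppRemote he (ht · e) φ
  · rw [epp_att_of_not_subset hqp he]
    exact forallLabel_seqComp.2 ⟨forallLabel_sem_sign p _ e,
      forallLabel_sem_eppRemote (tau_sig_subset e p) (ht · _) _⟩

theorem forallLabel_sem_epp (t : Phrase) (p : Place) (φ : List ℕ) (e : Evidence) :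
    (sem (epp t p e) p φ e).ForallLabel ProtectionCriterion := by
  induction t generalizing p φ e with
  | meas m q s | copy | sign | hash =>
    exact forallLabel_single.2 (.of_place_eq_recvPlace rfl)
  | att q t ih => exact forallLabel_sem_epp_att (ih q) p φ e
  | lseq t₁ t₂ ih₁ ih₂ =>
    have hrun :
        epp t₂ p (eval (epp t₁ p e) p [] e) = epp t₂ p (eval (epp t₁ p e) p (1 :: φ) e) :=
      epp_congr t₂ p (tau_eval_congr _ p _ _ rfl)
    rw [epp, hrun]
    exact forallLabel_seqComp.2 ⟨ih₁ p _ e, ih₂ p _ _⟩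
  | bseq d₁ d₂ t₁ t₂ ih₁ ih₂ | bpar d₁ d₂ t₁ t₂ ih₁ ih₂ =>
    exact forallLabel_branch.2
      ⟨.of_place_eq_recvPlace rfl, ih₁ p _ _, ih₂ p _ _, .of_place_eq_recvPlace rfl⟩

end Copland

open Copland in
/-- Cross-place communication events in the semantics of transformed phrases
satisfy the protection criterion: if `v` is a cross-place communication event of
`C(epp(t,p,e),p,φ,e)`, then `τ(ε(v)) ⊆ {ϱ(v)}`. -/
theorem tau_sub_sndp (t : Phrase) (p : Place) (e : Evidence) (φ : List ℕ)
    (v : ℕ) (hv : v < (sem (epp t p e) p φ e).n)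
    (hc : ((sem (epp t p e) p φ e).label v).IsCross) :
    tau (((sem (epp t p e) p φ e).label v).evid) ⊆
      {((sem (epp t p e) p φ e).label v).place} := by
  exact forallLabel_sem_epp t p φ e v hv hc
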